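/- Given a nihil decomposition A = A₁ ⊕ A₀ and a function T : A → A written as T = T₁ + T₀ with T₁(A) ⊆ A₁ and T₀(A) ⊆ A₀: T is a weak multiplier of A if and only if T₁ is a weak multiplier of A; moreover, if T is a weak multiplier, then T₁ is a K-linear map and T₁ vanishes on A₀. -/

import Mathlib

/-- A function `T : A → A` is a weak multiplier of `A` if
`x * T y = T x * y` for all `x, y`. -/
def IsWeakMultiplier {A : Type*} [Mul A] (T : A → A) : Prop :=
  ∀ x y : A, x * T y = T x * y

/-!
If `T` is a weak multiplier, then multiplying a linearity defect such as `T (x + y) - (T x + T y)`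
by `z` on either side moves `T` onto `z`, where the defect vanishes by distributivity. So `T` is
linear modulo the two-sided annihilator, and it is linear outright when its values lie in a
submodule meeting the annihilator trivially.
-/

section Semiring

variable {K A : Type*} [Semiring K] [NonUnitalNonAssocSemiring A] [Module K A]
  [SMulCommClass K A A] [IsScalarTower K A A]

variable (K A) in
/-- The intersection of the left and right annihilators of `A`, written `A₀` in a nihil
decomposition. It is encoded as a `K`-submodule, so that complements of it can be considered. -/
def twoSidedAnnihilator : Submodule K A where
  carrier := {a : A | (∀ x : A, a * x = 0) ∧ (∀ x : A, x * a = 0)}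
  zero_mem' := ⟨zero_mul, mul_zero⟩
  add_mem' ha hb :=
    ⟨fun x => by rw [add_mul, ha.1, hb.1, add_zero], fun x => by rw [mul_add, ha.2, hb.2, add_zero]⟩
  smul_mem' c _ ha :=
    ⟨fun x => by rw [smul_mul_assoc, ha.1, smul_zero],
      fun x => by rw [mul_smul_comm, ha.2, smul_zero]⟩

theorem mem_twoSidedAnnihilator {a : A} :
    a ∈ twoSidedAnnihilator K A ↔ (∀ x : A, a * x = 0) ∧ (∀ x : A, x * a = 0) :=
  Iff.rfl

theorem isWeakMultiplier_add_iff {T₁ T₀ : A → A} (h₀ : ∀ x, T₀ x ∈ twoSidedAnnihilator K A) :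
    IsWeakMultiplier (T₁ + T₀) ↔ IsWeakMultiplier T₁ := by
  refine forall₂_congr fun x y => ?_
  have mul_T₀ : x * T₀ y = 0 := (mem_twoSidedAnnihilator.1 (h₀ y)).2 x
  have T₀_mul : T₀ x * y = 0 := (mem_twoSidedAnnihilator.1 (h₀ x)).1 y
  rw [Pi.add_apply, Pi.add_apply, mul_add, add_mul, mul_T₀, T₀_mul, add_zero, add_zero]

namespace IsWeakMultiplier

variable {T : A → A}

theorem map_mem_twoSidedAnnihilator (hT : IsWeakMultiplier T) {x : A}
    (hx : x ∈ twoSidedAnnihilator K A) : T x ∈ twoSidedAnnihilator K A :=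
  ⟨fun z => (hT x z).symm.trans (hx.1 (T z)), fun z => (hT z x).trans (hx.2 (T z))⟩

theorem eq_zero_of_mem_twoSidedAnnihilator (hT : IsWeakMultiplier T) {M : Submodule K A}
    (hM : Disjoint M (twoSidedAnnihilator K A)) (hTM : ∀ x, T x ∈ M) {x : A}
    (hx : x ∈ twoSidedAnnihilator K A) : T x = 0 :=
  Submodule.disjoint_def.1 hM _ (hTM x) (hT.map_mem_twoSidedAnnihilator hx)

end IsWeakMultiplier

end Semiring

namespace IsWeakMultiplier

section Semiring

variable {K A : Type*} [Semiring K] [NonUnitalNonAssocRing A] [Module K A]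
  [SMulCommClass K A A] [IsScalarTower K A A] {T : A → A}

theorem map_add_sub_mem_twoSidedAnnihilator (hT : IsWeakMultiplier T) (x y : A) :
    T (x + y) - (T x + T y) ∈ twoSidedAnnihilator K A := by
  refine mem_twoSidedAnnihilator.2 ⟨fun z => ?_, fun z => ?_⟩
  · rw [sub_mul, add_mul, ← hT, ← hT, ← hT, add_mul, sub_self]
  · rw [mul_sub, mul_add, hT, hT, hT, mul_add, sub_self]

theorem map_smul_sub_mem_twoSidedAnnihilator (hT : IsWeakMultiplier T) (c : K) (x : A) :
    T (c • x) - c • T x ∈ twoSidedAnnihilator K A := by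
  refine mem_twoSidedAnnihilator.2 ⟨fun z => ?_, fun z => ?_⟩
  · rw [sub_mul, smul_mul_assoc, ← hT, ← hT, smul_mul_assoc, sub_self]
  · rw [mul_sub, mul_smul_comm, hT, hT, mul_smul_comm, sub_self]

end Semiring

theorem isLinearMap {K A : Type*} [Ring K] [NonUnitalNonAssocRing A] [Module K A]
    [SMulCommClass K A A] [IsScalarTower K A A] {T : A → A} (hT : IsWeakMultiplier T)
    {M : Submodule K A} (hM : Disjoint M (twoSidedAnnihilator K A)) (hTM : ∀ x, T x ∈ M) :
    IsLinearMap K T where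
  map_add x y := sub_eq_zero.1 <| Submodule.disjoint_def.1 hM _
    (sub_mem (hTM _) (add_mem (hTM x) (hTM y))) (hT.map_add_sub_mem_twoSidedAnnihilator x y)
  map_smul c x := sub_eq_zero.1 <| Submodule.disjoint_def.1 hM _
    (sub_mem (hTM _) (M.smul_mem c (hTM x))) (hT.map_smul_sub_mem_twoSidedAnnihilator c x)

end IsWeakMultiplier

theorem nihil_decomposition_weakMultiplier_general
    {K A : Type*} [Ring K] [NonUnitalNonAssocRing A] [Module K A]
    [SMulCommClass K A A] [IsScalarTower K A A] {A₁ : Submodule K A}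
    (hdisj : Disjoint A₁ (twoSidedAnnihilator K A)) {T₁ T₀ : A → A}
    (h₁ : ∀ x, T₁ x ∈ A₁) (h₀ : ∀ x, T₀ x ∈ twoSidedAnnihilator K A) :
    (IsWeakMultiplier (T₁ + T₀) ↔ IsWeakMultiplier T₁) ∧
    (IsWeakMultiplier (T₁ + T₀) →
      (∀ (a b : K) (x y : A), T₁ (a • x + b • y) = a • T₁ x + b • T₁ y) ∧
      (∀ x ∈ twoSidedAnnihilator K A, T₁ x = 0)) := by
  have weak_iff := isWeakMultiplier_add_iff (T₁ := T₁) h₀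
  refine ⟨weak_iff, fun hT => ?_⟩
  have hT₁ : IsWeakMultiplier T₁ := weak_iff.1 hT
  have hlin : IsLinearMap K T₁ := hT₁.isLinearMap hdisj h₁
  exact ⟨fun a b x y => by rw [hlin.map_add, hlin.map_smul, hlin.map_smul],
    fun x hx => hT₁.eq_zero_of_mem_twoSidedAnnihilator hdisj h₁ hx⟩

theorem nihil_decomposition_weakMultiplier
    {K A : Type*} [Field K] [NonUnitalNonAssocRing A] [Module K A]
    [SMulCommClass K A A] [IsScalarTower K A A]
    (A₁ A₀ : Submodule K A)
    (hA₀ : (A₀ : Set A) = {a : A | (∀ x : A, a * x = 0) ∧ (∀ x : A, x * a = 0)})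
    (hcompl : IsCompl A₁ A₀)
    (T T₁ T₀ : A → A)
    (hsum : ∀ x : A, T x = T₁ x + T₀ x)
    (h₁ : ∀ x : A, T₁ x ∈ A₁) (h₀ : ∀ x : A, T₀ x ∈ A₀) :
    (IsWeakMultiplier T ↔ IsWeakMultiplier T₁) ∧
    (IsWeakMultiplier T →
      (∀ (a b : K) (x y : A), T₁ (a • x + b • y) = a • T₁ x + b • T₁ y) ∧
      (∀ x ∈ A₀, T₁ x = 0)) := by
  obtain rfl : A₀ = twoSidedAnnihilator K A := SetLike.coe_injective hA₀
  obtain rfl : T = T₁ + T₀ := funext hsum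
  exact nihil_decomposition_weakMultiplier_general hcompl.disjoint h₁ h₀
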